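/- For every nonzero finite-dimensional subspace V ⊆ F₊, the suprema agree: sup_{z ∈ (V ⊕ F₋) \ {0}} ⟨z, Az⟩/‖z‖² = sup_{x ∈ V \ {0}} E(x) (as an equality of suprema, possibly +∞: each real number is an upper bound of one side if and only if it is an upper bound of the other). Consequently, the min-max values λ_k = inf_{V⊆F₊, dim V = k} sup_{z∈(V⊕F₋)\{0}} ⟨z,Az⟩/‖z‖² satisfy λ_k = inf_{V⊆F₊, dim V = k} sup_{x∈V\{0}} E(x). -/

import Mathlib

local notation "⟪" x ", " y "⟫" => @inner ℂ _ _ x y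

/-- The Rayleigh quotients of a symmetric operator over `span {x} ⊕ F`, where `F` is orthogonal to
`x` and the quadratic form is bounded above by `lam0` on `F`, are bounded above. -/
theorem rayleigh_span_add_le {H : Type*} [NormedAddCommGroup H] [InnerProductSpace ℂ H]
    (A : H →ₗ.[ℂ] H) (hsymm : ∀ x y : A.domain, ⟪A x, (y : H)⟫ = ⟪(x : H), A y⟫)
    (lam0 : ℝ) (x y : A.domain) (hx : (x : H) ≠ 0) (hxy : ⟪(x : H), (y : H)⟫ = 0)
    (hy : (⟪(y : H), A y⟫).re ≤ lam0 * ‖(y : H)‖ ^ 2) (c : ℂ) :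
    (⟪c • (x : H) + (y : H), A (c • x + y)⟫).re ≤
      (2 * (‖A x‖ / ‖(x : H)‖) + |lam0|) * ‖c • (x : H) + (y : H)‖ ^ 2 := by
  have hx' : 0 < ‖(x : H)‖ := norm_pos_iff.mpr hx
  set K := ‖A x‖ / ‖(x : H)‖ with hK
  have hK0 : 0 ≤ K := by positivity
  set u : A.domain := c • x with hu
  have hcoe : c • (x : H) = (u : H) := rfl
  have hAu : ‖A u‖ = K * ‖(u : H)‖ := by
    rw [hu, A.map_smul, ← hcoe, norm_smul, norm_smul, hK]
    field_simp
  have huy : ⟪(u : H), (y : H)⟫ = 0 := by rw [← hcoe, inner_smul_left, hxy, mul_zero]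
  have hnorm : ‖(u : H) + (y : H)‖ ^ 2 = ‖(u : H)‖ ^ 2 + ‖(y : H)‖ ^ 2 := by
    simpa only [sq] using norm_add_sq_eq_norm_sq_add_norm_sq_of_inner_eq_zero (u : H) (y : H) huy
  have h1 : (⟪(u : H), A u⟫).re ≤ ‖(u : H)‖ * ‖A u‖ := re_inner_le_norm (𝕜 := ℂ) _ _
  have h2 : (⟪(y : H), A u⟫).re ≤ ‖(y : H)‖ * ‖A u‖ := re_inner_le_norm (𝕜 := ℂ) _ _
  have h3 : (⟪(u : H), A y⟫).re ≤ ‖A u‖ * ‖(y : H)‖ := by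
    rw [← hsymm]
    exact re_inner_le_norm (𝕜 := ℂ) _ _
  rw [hcoe, hnorm, A.map_add, inner_add_left, inner_add_right, inner_add_right]
  simp only [Complex.add_re]
  rw [hAu] at h1 h2 h3
  nlinarith [mul_nonneg hK0 (sq_nonneg (‖(u : H)‖ - ‖(y : H)‖)),
    mul_nonneg hK0 (sq_nonneg ‖(y : H)‖),
    mul_le_mul_of_nonneg_right (le_abs_self lam0) (sq_nonneg ‖(y : H)‖),
    mul_nonneg (abs_nonneg lam0) (sq_nonneg ‖(u : H)‖)]

theorem Real.sSup_eq_of_upperBounds_eq {S T : Set ℝ} (hS : S.Nonempty) (hT : T.Nonempty)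
    (h : upperBounds S = upperBounds T) : sSup S = sSup T := by
  by_cases hb : BddAbove S
  · exact ((isLUB_congr h).mp (isLUB_csSup hS hb)).unique
      (isLUB_csSup hT (by rwa [BddAbove, ← h]))
  · rw [Real.sSup_of_not_bddAbove hb, Real.sSup_of_not_bddAbove (by rwa [BddAbove, ← h])]

/-- For every nonzero finite-dimensional subspace `V ⊆ F₊` the suprema agree:
a real number `b` is an upper bound of `{⟨z,Az⟩/‖z‖² : z ∈ (V ⊕ F₋) \ {0}}` if and only if
it is an upper bound of `{E(x) : x ∈ V \ {0}}`, where
`E(x) = sup_{z ∈ (span(x) ⊕ F₋) \ {0}} ⟨z,Az⟩/‖z‖²`. Consequently, for every `k ≥ 1`, the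
min-max values `λ_k = inf_{V ⊆ F₊, dim V = k} sup_{z ∈ (V⊕F₋)\{0}} ⟨z,Az⟩/‖z‖²` satisfy
`λ_k = inf_{V ⊆ F₊, dim V = k} sup_{x ∈ V\{0}} E(x)`. -/
theorem minmax_via_Ex
    {H : Type*} [NormedAddCommGroup H] [InnerProductSpace ℂ H] [CompleteSpace H]
    (A : H →ₗ.[ℂ] H)
    (hdense : Dense (A.domain : Set H))
    (hsymm : ∀ x y : A.domain, ⟪A x, (y : H)⟫ = ⟪(x : H), A y⟫)
    (P : H →L[ℂ] H)
    (hPsa : ∀ u v : H, ⟪P u, v⟫ = ⟪u, P v⟫)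
    (hPidem : ∀ u : H, P (P u) = P u)
    (hPinv : ∀ x ∈ A.domain, P x ∈ A.domain)
    (lam0 lam1 : ℝ) (hgap : lam0 < lam1)
    (hlam0 : ∀ y : A.domain, P (y : H) = 0 →
      (⟪(y : H), A y⟫).re ≤ lam0 * ‖(y : H)‖ ^ 2)
    (hlam1a : ∀ x : A.domain, P (x : H) = (x : H) → (x : H) ≠ 0 → ∀ ε > 0,
      ∃ y : A.domain, P (y : H) = 0 ∧
        (lam1 - ε) * ‖(x : H) + (y : H)‖ ^ 2 ≤ (⟪(x : H) + (y : H), A (x + y)⟫).re)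
    (hlam1b : ∀ μ : ℝ, lam1 < μ → ∃ x : A.domain, P (x : H) = (x : H) ∧ (x : H) ≠ 0 ∧
      ∀ y : A.domain, P (y : H) = 0 →
        (⟪(x : H) + (y : H), A (x + y)⟫).re ≤ μ * ‖(x : H) + (y : H)‖ ^ 2)
    (TE : A.domain → Set ℝ)
    (hTE : ∀ x : A.domain, TE x = {r : ℝ | ∃ (c : ℂ) (y : A.domain), P (y : H) = 0 ∧
      c • (x : H) + (y : H) ≠ 0 ∧
      r = (⟪c • (x : H) + (y : H), A (c • x + y)⟫).re / ‖c • (x : H) + (y : H)‖ ^ 2}) :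
    (∀ (V : Submodule ℂ H) (hVA : ∀ v ∈ V, v ∈ A.domain),
      (∀ v ∈ V, P v = v) → V ≠ ⊥ → FiniteDimensional ℂ V →
      ∀ b : ℝ,
        (b ∈ upperBounds {r : ℝ | ∃ (v : H) (hv : v ∈ V) (y : A.domain),
            P (y : H) = 0 ∧ v + (y : H) ≠ 0 ∧
            r = (⟪v + (y : H), A (⟨v, hVA v hv⟩ + y)⟫).re / ‖v + (y : H)‖ ^ 2} ↔
          b ∈ upperBounds {r : ℝ | ∃ x : A.domain,
            (x : H) ∈ V ∧ (x : H) ≠ 0 ∧ r = sSup (TE x)})) ∧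
    (∀ k : ℕ, 0 < k →
      sInf {r : ℝ | ∃ (V : Submodule ℂ H) (hVA : ∀ v ∈ V, v ∈ A.domain),
          (∀ v ∈ V, P v = v) ∧ Module.finrank ℂ V = k ∧
          r = sSup {s : ℝ | ∃ (v : H) (hv : v ∈ V) (y : A.domain),
              P (y : H) = 0 ∧ v + (y : H) ≠ 0 ∧
              s = (⟪v + (y : H), A (⟨v, hVA v hv⟩ + y)⟫).re / ‖v + (y : H)‖ ^ 2}} =
      sInf {r : ℝ | ∃ V : Submodule ℂ H, (∀ v ∈ V, v ∈ A.domain) ∧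
          (∀ v ∈ V, P v = v) ∧ Module.finrank ℂ V = k ∧
          r = sSup {s : ℝ | ∃ x : A.domain,
              (x : H) ∈ V ∧ (x : H) ≠ 0 ∧ s = sSup (TE x)}}) := by
  have hbdd : ∀ x : A.domain, P (x : H) = x → (x : H) ≠ 0 → BddAbove (TE x) := by
    intro x hPx hx
    refine ⟨2 * (‖A x‖ / ‖(x : H)‖) + |lam0|, ?_⟩
    rw [hTE]
    rintro r ⟨c, y, hy, hne, rfl⟩
    rw [div_le_iff₀ (pow_pos (norm_pos_iff.mpr hne) 2)]
    refine rayleigh_span_add_le A hsymm lam0 x y hx ?_ (hlam0 y hy) c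
    rw [← hPx, hPsa, hy, inner_zero_right]
  have hne : ∀ x : A.domain, (x : H) ≠ 0 → (TE x).Nonempty := by
    intro x hx
    rw [hTE]
    exact ⟨_, 1, 0, by simp, by simpa using hx, rfl⟩
  have main : ∀ (V : Submodule ℂ H) (hVA : ∀ v ∈ V, v ∈ A.domain),
      (∀ v ∈ V, P v = v) → V ≠ ⊥ → ∀ b : ℝ,
        (b ∈ upperBounds {r : ℝ | ∃ (v : H) (hv : v ∈ V) (y : A.domain),
            P (y : H) = 0 ∧ v + (y : H) ≠ 0 ∧
            r = (⟪v + (y : H), A (⟨v, hVA v hv⟩ + y)⟫).re / ‖v + (y : H)‖ ^ 2} ↔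
          b ∈ upperBounds {r : ℝ | ∃ x : A.domain,
            (x : H) ∈ V ∧ (x : H) ≠ 0 ∧ r = sSup (TE x)}) := by
    intro V hVA hVP hV b
    constructor
    · rintro hb r ⟨x, hxV, hx, rfl⟩
      refine csSup_le (hne x hx) fun r hr => hb ?_
      rw [hTE] at hr
      obtain ⟨c, y, hy, hz, rfl⟩ := hr
      exact ⟨c • (x : H), V.smul_mem c hxV, y, hy, hz, rfl⟩
    · rintro hb r ⟨v, hv, y, hy, hz, rfl⟩
      by_cases hv0 : v = 0
      · subst hv0
        obtain ⟨x, hxV, hx⟩ := V.ne_bot_iff.mp hV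
        refine (le_csSup (hbdd ⟨x, hVA x hxV⟩ (hVP x hxV) hx) ?_).trans (hb ⟨_, hxV, hx, rfl⟩)
        rw [hTE]
        refine ⟨0, y, hy, by simpa using hz, ?_⟩
        have h0 : (⟨0, hVA 0 hv⟩ : A.domain) = 0 := rfl
        simp only [h0, zero_smul]
      · refine (le_csSup (hbdd ⟨v, hVA v hv⟩ (hVP v hv) hv0) ?_).trans (hb ⟨_, hv, hv0, rfl⟩)
        rw [hTE]
        exact ⟨1, y, hy, by simpa using hz, by simp only [one_smul]⟩
  refine ⟨fun V hVA hVP hV _ => main V hVA hVP hV, fun k hk => ?_⟩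
  have key : ∀ (V : Submodule ℂ H) (hVA : ∀ v ∈ V, v ∈ A.domain),
      (∀ v ∈ V, P v = v) → Module.finrank ℂ V = k →
      sSup {s : ℝ | ∃ (v : H) (hv : v ∈ V) (y : A.domain),
          P (y : H) = 0 ∧ v + (y : H) ≠ 0 ∧
          s = (⟪v + (y : H), A (⟨v, hVA v hv⟩ + y)⟫).re / ‖v + (y : H)‖ ^ 2} =
      sSup {s : ℝ | ∃ x : A.domain, (x : H) ∈ V ∧ (x : H) ≠ 0 ∧ s = sSup (TE x)} := by
    intro V hVA hVP hVk
    have hV : V ≠ ⊥ := by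
      rintro rfl
      rw [finrank_bot] at hVk
      omega
    obtain ⟨x, hxV, hx⟩ := V.ne_bot_iff.mp hV
    exact Real.sSup_eq_of_upperBounds_eq ⟨_, x, hxV, 0, by simp, by simpa using hx, rfl⟩
      ⟨_, ⟨x, hVA x hxV⟩, hxV, hx, rfl⟩ (Set.ext (main V hVA hVP hV))
  congr 1
  ext r
  constructor
  · rintro ⟨V, hVA, hVP, hVk, rfl⟩
    exact ⟨V, hVA, hVP, hVk, key V hVA hVP hVk⟩
  · rintro ⟨V, hVA, hVP, hVk, rfl⟩
    exact ⟨V, hVA, hVP, hVk, (key V hVA hVP hVk).symm⟩
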